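/- Existence of typical subspace projectors. A quantum state on a finite-dimensional complex Hilbert space $H$ is a positive semidefinite operator $\rho$ on $H$ with $\operatorname{tr}\rho=1$; $S(\rho):=-\operatorname{tr}(\rho\log_2\rho)$ is its von Neumann entropy (with $0\log_2 0:=0$), $\rho^{\otimes n}$ is its $n$-fold tensor power on $H^{\otimes n}$, and $X\le Y$ means that $Y-X$ is positive semidefinite. There is a universal constant $K>0$ such that for every finite-dimensional complex Hilbert space $H$ with $d:=\dim H$, every quantum state $\rho$ on $H$, every $n\in\mathbb{N}$ with $n\ge 1$, and every $\alpha>0$, there exists an orthogonal projection $\Pi$ on $H^{\otimes n}$ commuting with $\rho^{\otimes n}$ and satisfying: (i) $\operatorname{tr}(\rho^{\otimes n}\Pi)\ge 1-\frac{d}{4\alpha^2}$; (ii) $\operatorname{tr}(\Pi)\le 2^{nS(\rho)+Kd\alpha\sqrt n}$; (iii) $\Pi\rho^{\otimes n}\Pi\le 2^{-nS(\rho)+Kd\alpha\sqrt n}\,\Pi$. -/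

import Mathlib

open scoped ComplexOrder MatrixOrder

/-- A quantum state on the Hilbert space with orthonormal basis indexed by `ι`:
a positive semidefinite operator with unit trace. -/
def IsState {ι : Type*} [Fintype ι] (ρ : Matrix ι ι ℂ) : Prop :=
  ρ.PosSemidef ∧ ρ.trace = 1

/-- The von Neumann entropy `S(ρ) = -tr(ρ log₂ ρ)`. The operator `log₂ ρ` is given by the functional
calculus; since `Real.logb 2 0 = 0`, the convention `0 log₂ 0 = 0` holds. -/
noncomputable def vnEntropy {ι : Type*} [Fintype ι] [DecidableEq ι] (ρ : Matrix ι ι ℂ) : ℝ :=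
  -(ρ * cfc (Real.logb 2) ρ).trace.re

/-- The tensor power `ρ^{⊗n}`, as a matrix in the product basis
`e_{i 0} ⊗ ⋯ ⊗ e_{i (n-1)}` of `H^{⊗n}`, indexed by `i : Fin n → ι`. -/
def tensorPow {ι : Type*} (n : ℕ) (ρ : Matrix ι ι ℂ) : Matrix (Fin n → ι) (Fin n → ι) ℂ :=
  Matrix.of fun i j => ∏ k, ρ (i k) (j k)

open Unitary

section TensorPower

variable {ι : Type*}

theorem tensorPow_mul [Fintype ι] [DecidableEq ι] (n : ℕ) (A B : Matrix ι ι ℂ) :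
    tensorPow n (A * B) = tensorPow n A * tensorPow n B := by
  ext i j
  simp only [tensorPow, Matrix.of_apply, Matrix.mul_apply]
  rw [Finset.prod_univ_sum, Fintype.piFinset_univ]
  simp only [Finset.prod_mul_distrib]

theorem tensorPow_star (n : ℕ) (A : Matrix ι ι ℂ) :
    tensorPow n (star A) = star (tensorPow n A) := by
  ext i j
  simp [tensorPow, Matrix.star_apply]

theorem tensorPow_diagonal [DecidableEq ι] (n : ℕ) (v : ι → ℂ) :
    tensorPow n (Matrix.diagonal v) = Matrix.diagonal fun x : Fin n → ι => ∏ k, v (x k) := by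
  ext i j
  simp only [tensorPow, Matrix.of_apply]
  by_cases h : i = j
  · subst h; simp
  · obtain ⟨k, hk⟩ := Function.ne_iff.mp h
    rw [Matrix.diagonal_apply_ne _ h]
    exact Finset.prod_eq_zero (Finset.mem_univ k) (Matrix.diagonal_apply_ne _ hk)

theorem tensorPow_one [DecidableEq ι] (n : ℕ) :
    tensorPow n (1 : Matrix ι ι ℂ) = 1 := by
  rw [← Matrix.diagonal_one, tensorPow_diagonal]
  simp

theorem tensorPow_mem_unitary [Fintype ι] [DecidableEq ι] (n : ℕ) {U : Matrix ι ι ℂ}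
    (hU : U ∈ unitary (Matrix ι ι ℂ)) :
    tensorPow n U ∈ unitary (Matrix (Fin n → ι) (Fin n → ι) ℂ) := by
  rw [Unitary.mem_iff] at hU ⊢
  rw [← tensorPow_star, ← tensorPow_mul, ← tensorPow_mul, hU.1, hU.2, tensorPow_one]
  exact ⟨rfl, rfl⟩

theorem tensorPow_conjStarAlgAut_diagonal [Fintype ι] [DecidableEq ι] (n : ℕ)
    (U : unitary (Matrix ι ι ℂ)) (v : ι → ℂ) :
    tensorPow n (conjStarAlgAut ℂ _ U (Matrix.diagonal v)) =
      conjStarAlgAut ℂ (Matrix (Fin n → ι) (Fin n → ι) ℂ)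
        ⟨tensorPow n (U : Matrix ι ι ℂ), tensorPow_mem_unitary n U.2⟩
        (Matrix.diagonal fun x : Fin n → ι => ∏ k, v (x k)) := by
  simp only [conjStarAlgAut_apply, tensorPow_mul, tensorPow_star, tensorPow_diagonal]

end TensorPower

section Conjugation

variable {κ : Type*} [Fintype κ] [DecidableEq κ]

theorem trace_conjStarAlgAut (W : unitary (Matrix κ κ ℂ)) (A : Matrix κ κ ℂ) :
    (conjStarAlgAut ℂ _ W A).trace = A.trace := by
  rw [conjStarAlgAut_apply, Matrix.trace_mul_comm, ← mul_assoc, Unitary.coe_star_mul_self,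
    one_mul]

theorem conjStarAlgAut_diagonal_nonneg (W : unitary (Matrix κ κ ℂ)) {v : κ → ℂ}
    (hv : ∀ x, 0 ≤ v x) : 0 ≤ conjStarAlgAut ℂ _ W (Matrix.diagonal v) := by
  rw [Matrix.nonneg_iff_posSemidef, conjStarAlgAut_apply, Matrix.star_eq_conjTranspose]
  exact (Matrix.PosSemidef.diagonal hv).mul_mul_conjTranspose_same _

end Conjugation

theorem IsState.sum_eigenvalues {ι : Type*} [Fintype ι] [DecidableEq ι] {ρ : Matrix ι ι ℂ}
    (h : IsState ρ) : ∑ i, h.1.isHermitian.eigenvalues i = 1 := by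
  have := congrArg Complex.re (h.2.symm.trans h.1.isHermitian.trace_eq_sum_eigenvalues)
  simpa using this.symm

theorem vnEntropy_eq_sum_eigenvalues {ι : Type*} [Fintype ι] [DecidableEq ι] {ρ : Matrix ι ι ℂ}
    (h : ρ.IsHermitian) :
    vnEntropy ρ = -∑ i, h.eigenvalues i * Real.logb 2 (h.eigenvalues i) := by
  have key : ρ * cfc (Real.logb 2) ρ = conjStarAlgAut ℂ _ h.eigenvectorUnitary
      (Matrix.diagonal fun i => ((h.eigenvalues i * Real.logb 2 (h.eigenvalues i) : ℝ) : ℂ)) := by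
    rw [h.cfc_eq]
    conv_lhs => enter [1]; rw [h.spectral_theorem]
    rw [Matrix.IsHermitian.cfc, ← map_mul, Matrix.diagonal_mul_diagonal]
    simp
  rw [vnEntropy, key, trace_conjStarAlgAut, Matrix.trace_diagonal, ← Complex.ofReal_sum,
    Complex.ofReal_re]

section ProductDistribution

variable {ι : Type*} [Fintype ι]

theorem sum_prod_eq_one {p : ι → ℝ} (hp : ∑ i, p i = 1) (n : ℕ) :
    ∑ x : Fin n → ι, ∏ k, p (x k) = 1 := by
  classical
  rw [← Fintype.piFinset_univ, ← Finset.prod_univ_sum]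
  simp [hp]

theorem sum_fin_succ_fun {n : ℕ} (g : (Fin (n + 1) → ι) → ℝ) :
    ∑ x, g x = ∑ a : ι, ∑ y : Fin n → ι, g (Fin.cons a y) := by
  rw [← Fintype.sum_prod_type', ← (Fin.consEquiv fun _ => ι).sum_comp]
  rfl

theorem sum_prod_mul_sum_eq_zero {p f : ι → ℝ} (hp : ∑ i, p i = 1) (hf : ∑ i, p i * f i = 0)
    (n : ℕ) : ∑ x : Fin n → ι, (∏ k, p (x k)) * ∑ k, f (x k) = 0 := by
  induction n with
  | zero => simp
  | succ n ih =>
    rw [sum_fin_succ_fun]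
    simp only [Fin.prod_univ_succ, Fin.sum_univ_succ, Fin.cons_zero, Fin.cons_succ]
    have (a : ι) : ∑ y : Fin n → ι, p a * (∏ k, p (y k)) * (f a + ∑ k, f (y k)) = p a * f a := by
      have e (y : Fin n → ι) : p a * (∏ k, p (y k)) * (f a + ∑ k, f (y k)) =
          p a * f a * (∏ k, p (y k)) + p a * ((∏ k, p (y k)) * ∑ k, f (y k)) := by ring
      simp only [e, Finset.sum_add_distrib, ← Finset.mul_sum, ih, sum_prod_eq_one hp]
      ring
    simp only [this, hf]

/-- The variance of a sum of independent identically distributed centred random variables. -/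
theorem sum_prod_mul_sum_sq {p f : ι → ℝ} (hp : ∑ i, p i = 1) (hf : ∑ i, p i * f i = 0)
    (n : ℕ) :
    ∑ x : Fin n → ι, (∏ k, p (x k)) * (∑ k, f (x k)) ^ 2 = n * ∑ i, p i * f i ^ 2 := by
  induction n with
  | zero => simp
  | succ n ih =>
    rw [sum_fin_succ_fun]
    simp only [Fin.prod_univ_succ, Fin.sum_univ_succ, Fin.cons_zero, Fin.cons_succ]
    have (a : ι) : ∑ y : Fin n → ι, p a * (∏ k, p (y k)) * (f a + ∑ k, f (y k)) ^ 2 =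
        p a * f a ^ 2 + p a * (n * ∑ i, p i * f i ^ 2) := by
      have e (y : Fin n → ι) : p a * (∏ k, p (y k)) * (f a + ∑ k, f (y k)) ^ 2 =
          p a * f a ^ 2 * (∏ k, p (y k)) + 2 * p a * f a * ((∏ k, p (y k)) * ∑ k, f (y k)) +
            p a * ((∏ k, p (y k)) * (∑ k, f (y k)) ^ 2) := by ring
      simp only [e, Finset.sum_add_distrib, ← Finset.mul_sum, ih, sum_prod_eq_one hp,
        sum_prod_mul_sum_eq_zero hp hf]
      ring
    simp only [this, Finset.sum_add_distrib, ← Finset.sum_mul, hp]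
    push_cast
    ring

/-- Chebyshev's inequality for a sum of independent identically distributed centred random
variables. -/
theorem sum_prod_filter_lt_abs_sum_le {p f : ι → ℝ} (hp₀ : ∀ i, 0 ≤ p i) (hp : ∑ i, p i = 1)
    (hf : ∑ i, p i * f i = 0) (n : ℕ) {δ : ℝ} (hδ : 0 < δ) :
    ∑ x : Fin n → ι with δ < |∑ k, f (x k)|, ∏ k, p (x k) ≤
      n * (∑ i, p i * f i ^ 2) / δ ^ 2 := by
  rw [le_div_iff₀ (by positivity), ← sum_prod_mul_sum_sq hp hf, Finset.sum_mul]
  refine (Finset.sum_le_sum fun x hx => ?_).trans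
    (Finset.sum_le_sum_of_subset_of_nonneg (Finset.filter_subset _ _) fun x _ _ => ?_)
  · refine mul_le_mul_of_nonneg_left ?_ (Finset.prod_nonneg fun k _ => hp₀ _)
    rw [← sq_abs (∑ k, f (x k))]
    exact pow_le_pow_left₀ hδ.le (Finset.mem_filter.mp hx).2.le 2
  · exact mul_nonneg (Finset.prod_nonneg fun k _ => hp₀ _) (sq_nonneg _)

end ProductDistribution

theorem mul_logb_two_sq_le {p : ℝ} (h₀ : 0 ≤ p) (h₁ : p ≤ 1) : p * Real.logb 2 p ^ 2 ≤ 9 := by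
  rcases h₀.eq_or_lt with rfl | hp
  · simp
  have h := Real.abs_log_mul_self_rpow_lt p (1 / 2) hp h₁ (by norm_num)
  rw [← Real.sqrt_eq_rpow] at h
  have hsq : p * Real.log p ^ 2 ≤ 4 := by
    have e : p * Real.log p ^ 2 = |Real.log p * √p| ^ 2 := by
      rw [sq_abs, mul_pow, Real.sq_sqrt h₀]; ring
    rw [e]
    nlinarith [abs_nonneg (Real.log p * √p)]
  have hl : (2 / 3 : ℝ) ≤ Real.log 2 := by linarith [Real.log_two_gt_d9]
  rw [Real.logb, div_pow, ← mul_div_assoc, div_le_iff₀ (by positivity)]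
  nlinarith

/-- The set of typical sequences of a probability distribution on a finite set. -/
theorem exists_typical_set {ι : Type*} [Fintype ι] {p : ι → ℝ} (hp₀ : ∀ i, 0 ≤ p i)
    (hp : ∑ i, p i = 1) {n : ℕ} (hn : 1 ≤ n) {α : ℝ} (hα : 0 < α) {S : ℝ}
    (hS : S = -∑ i, p i * Real.logb 2 (p i)) :
    ∃ T : Finset (Fin n → ι),
      1 - (Fintype.card ι : ℝ) / (4 * α ^ 2) ≤ ∑ x ∈ T, ∏ k, p (x k) ∧
      (T.card : ℝ) ≤ (2 : ℝ) ^ (n * S + 6 * Fintype.card ι * α * √n) ∧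
      ∀ x ∈ T, ∏ k, p (x k) ≤ (2 : ℝ) ^ (-(n * S) + 6 * Fintype.card ι * α * √n) := by
  classical
  set d : ℝ := (Fintype.card ι : ℝ) with hd
  have hι : Nonempty ι := by
    by_contra h
    rw [not_nonempty_iff] at h
    simp at hp
  have hd1 : 1 ≤ d := by
    rw [hd]; exact_mod_cast Fintype.card_pos
  have hn0 : (0 : ℝ) < n := by exact_mod_cast hn
  have hp1 (i : ι) : p i ≤ 1 := hp ▸ Finset.single_le_sum (fun j _ => hp₀ j) (Finset.mem_univ i)
  set f : ι → ℝ := fun i => Real.logb 2 (p i) + S with hf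
  set δ : ℝ := 6 * d * α * √n with hδ
  have hδ0 : 0 < δ := by positivity
  have hmean : ∑ i, p i * f i = 0 := by
    simp only [hf, mul_add, Finset.sum_add_distrib, ← Finset.sum_mul, hp, hS]
    ring
  have hvar : ∑ i, p i * f i ^ 2 ≤ 9 * d := by
    have e (i : ι) : p i * f i ^ 2 =
        p i * Real.logb 2 (p i) ^ 2 + 2 * S * (p i * Real.logb 2 (p i)) + S ^ 2 * p i := by
      simp only [hf]; ring
    have hS' : ∑ i, p i * Real.logb 2 (p i) = -S := by rw [hS, neg_neg]
    simp only [e, Finset.sum_add_distrib, ← Finset.mul_sum, hp, hS']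
    have : ∑ i, p i * Real.logb 2 (p i) ^ 2 ≤ ∑ _i : ι, (9 : ℝ) :=
      Finset.sum_le_sum fun i _ => mul_logb_two_sq_le (hp₀ i) (hp1 i)
    rw [Finset.sum_const, nsmul_eq_mul, Finset.card_univ, ← hd] at this
    nlinarith [sq_nonneg S]
  have hP0 (x : Fin n → ι) : 0 ≤ ∏ k, p (x k) := Finset.prod_nonneg fun k _ => hp₀ _
  set T : Finset (Fin n → ι) := {x | (∀ k, 0 < p (x k)) ∧ |∑ k, f (x k)| ≤ δ} with hT
  have hprob {x : Fin n → ι} (hx : x ∈ T) :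
      ∏ k, p (x k) = (2 : ℝ) ^ (-(n * S) + ∑ k, f (x k)) := by
    have hpos := (Finset.mem_filter.mp hx).2.1
    have e : -(n * S) + ∑ k, f (x k) = ∑ k, Real.logb 2 (p (x k)) := by
      simp [hf, Finset.sum_add_distrib]
    rw [e, Real.rpow_sum_of_pos two_pos]
    exact Finset.prod_congr rfl fun k _ =>
      (Real.rpow_logb two_pos (by norm_num) (hpos k)).symm
  have habs {x : Fin n → ι} (hx : x ∈ T) : |∑ k, f (x k)| ≤ δ := (Finset.mem_filter.mp hx).2.2
  refine ⟨T, ?_, ?_, fun x hx => ?_⟩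
  · have hcheb := sum_prod_filter_lt_abs_sum_le hp₀ hp hmean n hδ0
    have hbound : n * (∑ i, p i * f i ^ 2) / δ ^ 2 ≤ d / (4 * α ^ 2) := by
      have hδ2 : δ ^ 2 = 36 * d ^ 2 * α ^ 2 * n := by
        rw [hδ, mul_pow, Real.sq_sqrt hn0.le]; ring
      rw [hδ2, div_le_div_iff₀ (by positivity) (by positivity)]
      have h1 : ∑ i, p i * f i ^ 2 ≤ 9 * d ^ 3 := by
        refine hvar.trans ?_
        nlinarith [pow_le_pow_right₀ hd1 (show 1 ≤ 3 by norm_num)]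
      calc n * (∑ i, p i * f i ^ 2) * (4 * α ^ 2)
          ≤ n * (9 * d ^ 3) * (4 * α ^ 2) := by gcongr
        _ = d * (36 * d ^ 2 * α ^ 2 * n) := by ring
    have hcompl : ∑ x ∈ Tᶜ, ∏ k, p (x k) ≤
        ∑ x : Fin n → ι with δ < |∑ k, f (x k)|, ∏ k, p (x k) := by
      rw [Finset.sum_filter, ← Finset.sum_add_sum_compl T]
      refine le_add_of_nonneg_of_le
        (Finset.sum_nonneg fun x _ => ?_) (Finset.sum_le_sum fun x hx => ?_)
      · split_ifs
        exacts [hP0 x, le_rfl]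
      · split_ifs with h
        · exact le_rfl
        · have : ¬ ∀ k, 0 < p (x k) := fun h' =>
            Finset.mem_compl.mp hx (Finset.mem_filter.mpr ⟨Finset.mem_univ _, h', not_lt.mp h⟩)
          push Not at this
          obtain ⟨k, hk⟩ := this
          exact (Finset.prod_eq_zero (Finset.mem_univ k) (le_antisymm hk (hp₀ _))).le
    have htot := Finset.sum_add_sum_compl T fun x => ∏ k, p (x k)
    rw [sum_prod_eq_one hp] at htot
    linarith
  · have hle : (T.card : ℝ) * (2 : ℝ) ^ (-(n * S + δ)) ≤ 1 := by
      rw [← nsmul_eq_mul, ← sum_prod_eq_one hp n]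
      refine (Finset.card_nsmul_le_sum T (fun x => ∏ k, p (x k)) _ fun x hx => ?_).trans
        (Finset.sum_le_sum_of_subset_of_nonneg (Finset.subset_univ _) fun x _ _ => hP0 x)
      rw [hprob hx]
      exact Real.rpow_le_rpow_of_exponent_le one_le_two
        (by linarith [neg_abs_le (∑ k, f (x k)), habs hx])
    rwa [Real.rpow_neg two_pos.le, ← div_eq_mul_inv, div_le_one (by positivity)] at hle
  · rw [hprob hx]
    exact Real.rpow_le_rpow_of_exponent_le one_le_two
      (by linarith [le_abs_self (∑ k, f (x k)), habs hx])

/-- Existence of typical subspace projectors. The inequality `≤` between matrices is the Loewner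
order: `A ≤ B` means that `B - A` is positive semidefinite. -/
theorem typical_projector :
    ∃ K : ℝ, 0 < K ∧
      ∀ (d : ℕ) (ρ : Matrix (Fin d) (Fin d) ℂ), IsState ρ →
      ∀ n : ℕ, 1 ≤ n → ∀ α : ℝ, 0 < α →
      ∃ E : Matrix (Fin n → Fin d) (Fin n → Fin d) ℂ,
        IsStarProjection E ∧
        Commute E (tensorPow n ρ) ∧
        1 - (d : ℝ) / (4 * α ^ 2) ≤ (tensorPow n ρ * E).trace.re ∧
        E.trace.re ≤ (2 : ℝ) ^ ((n : ℝ) * vnEntropy ρ + K * d * α * Real.sqrt n) ∧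
        E * tensorPow n ρ * E ≤
          (2 : ℝ) ^ (-((n : ℝ) * vnEntropy ρ) + K * d * α * Real.sqrt n) • E := by
  refine ⟨6, by norm_num, fun d ρ hρ n hn α hα => ?_⟩
  have hH := hρ.1.isHermitian
  obtain ⟨T, hprob, hcard, hmax⟩ := exists_typical_set hρ.1.eigenvalues_nonneg
    hρ.sum_eigenvalues hn hα (vnEntropy_eq_sum_eigenvalues hH)
  rw [Fintype.card_fin] at hprob hcard hmax
  set p := hH.eigenvalues
  set W : unitary (Matrix (Fin n → Fin d) (Fin n → Fin d) ℂ) :=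
    ⟨tensorPow n (hH.eigenvectorUnitary : Matrix (Fin d) (Fin d) ℂ),
      tensorPow_mem_unitary n hH.eigenvectorUnitary.2⟩
  set Φ := conjStarAlgAut ℂ _ W with hΦ
  have hρn : tensorPow n ρ = Φ (Matrix.diagonal fun x => ((∏ k, p (x k) : ℝ) : ℂ)) := by
    conv_lhs => rw [hH.spectral_theorem, tensorPow_conjStarAlgAut_diagonal]
    simp [hΦ, W, p]
  set χ : (Fin n → Fin d) → ℂ := fun x => if x ∈ T then 1 else 0 with hχ
  set c : ℝ := (2 : ℝ) ^ (-((n : ℝ) * vnEntropy ρ) + 6 * d * α * Real.sqrt n)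
  refine ⟨Φ (Matrix.diagonal χ), ⟨?_, ?_⟩, ?_, ?_, ?_, ?_⟩
  · rw [IsIdempotentElem, ← map_mul, Matrix.diagonal_mul_diagonal]
    simp [hχ]
  · rw [IsSelfAdjoint, ← map_star, Matrix.star_eq_conjTranspose, Matrix.diagonal_conjTranspose]
    congr 2
    ext x
    simp only [hχ, Pi.star_apply]
    split_ifs <;> simp
  · rw [hρn]
    exact (Matrix.commute_diagonal _ _).map Φ
  · rw [hρn, ← map_mul, hΦ, trace_conjStarAlgAut, Matrix.diagonal_mul_diagonal,
      Matrix.trace_diagonal]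
    refine hprob.trans_eq ?_
    simp only [hχ, mul_ite, mul_one, mul_zero, Finset.sum_ite_mem, Finset.univ_inter]
    rw [← Complex.ofReal_sum, Complex.ofReal_re]
  · rw [hΦ, trace_conjStarAlgAut, Matrix.trace_diagonal]
    simpa [hχ] using hcard
  · have hdiff : c • Φ (Matrix.diagonal χ) -
        Φ (Matrix.diagonal χ) * tensorPow n ρ * Φ (Matrix.diagonal χ) =
        Φ (Matrix.diagonal fun x => if x ∈ T then ((c - ∏ k, p (x k) : ℝ) : ℂ) else 0) := by
      rw [hρn, ← Complex.coe_smul, ← map_mul, ← map_mul, ← map_smul, ← map_sub,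
        Matrix.diagonal_mul_diagonal, Matrix.diagonal_mul_diagonal, ← Matrix.diagonal_smul,
        Matrix.diagonal_sub]
      congr 2
      ext x
      by_cases hx : x ∈ T <;> simp [hχ, hx]
    rw [← sub_nonneg, hdiff]
    refine conjStarAlgAut_diagonal_nonneg W fun x => ?_
    split_ifs with hx
    · exact Complex.zero_le_real.mpr (sub_nonneg.mpr (hmax x hx))
    · exact le_rfl
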